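/- Let N ≥ 1 be an integer, ℓ > 0, a_1, …, a_N nonzero reals, r real, μ ∈ ℝ^N. Set Ξ_i = 1 + a_i²/ℓ² and W = 1 + Σ_{i=1}^N a_i² μ_i²/(ℓ² Ξ_i). Let γ̃ be the N × N symmetric real matrix with entries γ̃_{ij} = ((r² + a_i²)/Ξ_i)·δ_{ij} − (r²/(1 + Σ_{k=1}^N μ_k²))·μ_i μ_j − ((ℓ² − r²)/(4W))·(2 a_i² μ_i/(ℓ² Ξ_i))·(2 a_j² μ_j/(ℓ² Ξ_j)). Then det γ̃ = (1/(W·(1 + Σ_{k=1}^N μ_k²)))·(1 + Σ_{k=1}^N a_k² μ_k²/(r² + a_k²))·∏_{k=1}^N (r² + a_k²)/Ξ_k. -/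

import Mathlib

/-- Determinant of a rank-two symmetric perturbation of an invertible diagonal matrix. -/
theorem Matrix.det_diagonal_sub_rank_two {n K : Type*} [Fintype n] [DecidableEq n] [Field K]
    (d u v : n → K) (p q : K) (hd : ∀ i, d i ≠ 0) :
    (Matrix.of fun i j : n => (if i = j then d i else 0) - p * (u i * u j) - q * (v i * v j)).det =
      (∏ i, d i) * ((1 - p * ∑ i, u i ^ 2 / d i) * (1 - q * ∑ i, v i ^ 2 / d i) -
        p * q * (∑ i, u i * v i / d i) ^ 2) := by
  have hfactor : (Matrix.of fun i j : n =>
      (if i = j then d i else 0) - p * (u i * u j) - q * (v i * v j)) =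
      Matrix.diagonal d * (1 + (Matrix.of fun (i : n) (k : Fin 2) => ![-p * u i, -q * v i] k / d i) *
        (Matrix.of fun (k : Fin 2) (j : n) => ![u j, v j] k)) := by
    ext i j
    have hi := hd i
    rw [Matrix.diagonal_mul]
    simp only [Matrix.of_apply, Matrix.add_apply, Matrix.mul_apply, Fin.sum_univ_two,
      Matrix.one_apply, Matrix.cons_val_zero, Matrix.cons_val_one]
    split_ifs <;> field_simp <;> ring
  rw [hfactor, Matrix.det_mul, Matrix.det_diagonal, Matrix.det_one_add_mul_comm, Matrix.det_fin_two]
  simp only [Matrix.of_apply, Matrix.add_apply, Matrix.mul_apply, Matrix.one_apply,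
    Matrix.cons_val_zero, Matrix.cons_val_one, if_true, Fin.zero_eq_one_iff, Fin.one_eq_zero_iff,
    OfNat.ofNat_ne_one, if_false]
  have huu : ∑ x, u x * (-p * u x / d x) = -p * ∑ i, u i ^ 2 / d i := by
    rw [Finset.mul_sum]; exact Finset.sum_congr rfl fun _ _ => by ring
  have hvv : ∑ x, v x * (-q * v x / d x) = -q * ∑ i, v i ^ 2 / d i := by
    rw [Finset.mul_sum]; exact Finset.sum_congr rfl fun _ _ => by ring
  have huv : ∑ x, u x * (-q * v x / d x) = -q * ∑ i, u i * v i / d i := by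
    rw [Finset.mul_sum]; exact Finset.sum_congr rfl fun _ _ => by ring
  have hvu : ∑ x, v x * (-p * u x / d x) = -p * ∑ i, u i * v i / d i := by
    rw [Finset.mul_sum]; exact Finset.sum_congr rfl fun _ _ => by ring
  rw [huu, hvv, huv, hvu]
  ring

/-- Determinant of the matrix `γ̃` of the `μ`-sector of the metric
(after eliminating the constrained variable `μ_{N+1}`):
`det γ̃ = (1/(W (1 + ∑ μₖ²))) (1 + ∑ aₖ² μₖ²/(r² + aₖ²)) ∏ₖ (r² + aₖ²)/Ξₖ`. -/
theorem mu_sector_det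
    (N : ℕ) (hN : 1 ≤ N) (L : ℝ) (hL : 0 < L) (a : Fin N → ℝ) (ha : ∀ i, a i ≠ 0)
    (r : ℝ) (μ : Fin N → ℝ) :
    let Ξ : Fin N → ℝ := fun i => 1 + a i ^ 2 / L ^ 2
    let W : ℝ := 1 + ∑ i, a i ^ 2 * μ i ^ 2 / (L ^ 2 * Ξ i)
    (Matrix.of fun i j : Fin N =>
        (if i = j then (r ^ 2 + a i ^ 2) / Ξ i else 0) -
          r ^ 2 / (1 + ∑ k, μ k ^ 2) * (μ i * μ j) -
          (L ^ 2 - r ^ 2) / (4 * W) * (2 * a i ^ 2 * μ i / (L ^ 2 * Ξ i)) *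
            (2 * a j ^ 2 * μ j / (L ^ 2 * Ξ j))).det =
      1 / (W * (1 + ∑ k, μ k ^ 2)) *
        (1 + ∑ k, a k ^ 2 * μ k ^ 2 / (r ^ 2 + a k ^ 2)) *
        ∏ k, (r ^ 2 + a k ^ 2) / Ξ k := by
  intro Ξ W
  have hΞ (i) : 0 < Ξ i := by positivity
  have hρ (i) : 0 < r ^ 2 + a i ^ 2 := by have := ha i; positivity
  have hW : 0 < W :=
    add_pos_of_pos_of_nonneg one_pos (Finset.sum_nonneg fun i _ => by have := hΞ i; positivity)
  have hM : 0 < 1 + ∑ k, μ k ^ 2 := by positivity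
  have hd (i) : (r ^ 2 + a i ^ 2) / Ξ i ≠ 0 := (div_pos (hρ i) (hΞ i)).ne'
  have hdet := Matrix.det_diagonal_sub_rank_two (fun i => (r ^ 2 + a i ^ 2) / Ξ i) μ
    (fun i => 2 * a i ^ 2 * μ i / (L ^ 2 * Ξ i)) (r ^ 2 / (1 + ∑ k, μ k ^ 2))
    ((L ^ 2 - r ^ 2) / (4 * W)) hd
  simp only [← mul_assoc] at hdet ⊢
  rw [hdet]
  set T := ∑ k, a k ^ 2 * μ k ^ 2 / (r ^ 2 + a k ^ 2) with hT
  have hΞL (i) : L ^ 2 * Ξ i = L ^ 2 + a i ^ 2 := by simp only [Ξ]; field_simp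
  have hΞ' (i) : Ξ i = (L ^ 2 + a i ^ 2) / L ^ 2 := by simp only [Ξ]; field_simp
  have hLa (i) : L ^ 2 + a i ^ 2 ≠ 0 := by positivity
  have hA : r ^ 2 * ∑ i, μ i ^ 2 / ((r ^ 2 + a i ^ 2) / Ξ i) =
      ∑ i, μ i ^ 2 - T + r ^ 2 / L ^ 2 * T := by
    rw [hT, Finset.mul_sum, Finset.mul_sum, ← Finset.sum_sub_distrib, ← Finset.sum_add_distrib]
    refine Finset.sum_congr rfl fun i _ => ?_
    have := (hρ i).ne'
    rw [hΞ' i]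
    field_simp
    ring
  have hB : (L ^ 2 - r ^ 2) * ∑ i, (2 * a i ^ 2 * μ i / (L ^ 2 * Ξ i)) ^ 2 /
      ((r ^ 2 + a i ^ 2) / Ξ i) = 4 * (W - 1 - r ^ 2 / L ^ 2 * T) := by
    simp only [W, add_sub_cancel_left]
    rw [hT, Finset.mul_sum, Finset.mul_sum, ← Finset.sum_sub_distrib, Finset.mul_sum]
    refine Finset.sum_congr rfl fun i _ => ?_
    have := (hρ i).ne'
    have := hLa i
    rw [hΞL i, hΞ' i]
    field_simp
    ring
  have hC : ∑ i, μ i * (2 * a i ^ 2 * μ i / (L ^ 2 * Ξ i)) / ((r ^ 2 + a i ^ 2) / Ξ i) =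
      2 / L ^ 2 * T := by
    rw [hT, Finset.mul_sum]
    refine Finset.sum_congr rfl fun i _ => ?_
    have := (hρ i).ne'
    have := hLa i
    rw [hΞL i, hΞ' i]
    field_simp
  rw [hC, div_mul_eq_mul_div (r ^ 2), hA, div_mul_eq_mul_div (L ^ 2 - r ^ 2), hB, mul_comm (∏ i, _)]
  congr 1
  clear_value W T
  generalize ∑ k, μ k ^ 2 = S at *
  field_simp
  ring
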